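/- arXiv:2412.00295 — 2 statements merged into one kernel-verified Lean document; each statement's English description precedes it below -/
import Mathlib

section
/- The trace of X_ρ equals n·λ, and consequently the eigenspace of X_ρ for the eigenvalue λ has dimension exactly n (equivalently, the rank of X_ρ is n). -/
open Matrix Finset

/-- Integer power of a matrix `U`, where negative powers are interpreted as
powers of the conjugate transpose `Uᴴ`. -/
noncomputable def zpowU {n : ℕ} (U : Matrix (Fin n) (Fin n) ℂ) : ℤ → Matrix (Fin n) (Fin n) ℂ :=
  fun z => if 0 ≤ z then U ^ z.toNat else Uᴴ ^ (-z).toNat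

/-- The τn×τn block matrix `X_ρ` whose (i,j)-th n×n block (0-based `i, j`) is
`ρ^(i+j) · U^(j-i)`. -/
noncomputable def Xmat {n : ℕ} (τ : ℕ) (ρ : ℝ) (U : Matrix (Fin n) (Fin n) ℂ) :
    Matrix (Fin τ × Fin n) (Fin τ × Fin n) ℂ :=
  fun p q => (ρ : ℂ) ^ ((p.1 : ℕ) + (q.1 : ℕ)) * zpowU U ((q.1 : ℤ) - (p.1 : ℤ)) p.2 q.2

/-! Write `R = [1, ρU, (ρU)², …, (ρU)^(τ-1)]` for the block row of powers of `ρU`. Unitarity gives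
`X_ρ = Rᴴ R`, whereas in the opposite order `R Rᴴ = ∑ ρ^(2k) U^k (Uᴴ)^k = λ • 1` is a nonzero
scalar matrix of size `n`. Hence `X_ρ` has the trace `tr (R Rᴴ) = n λ` and the rank `n` of
`R Rᴴ`, and `X_ρ² = λ X_ρ`, so its eigenspace for `λ` is its whole range. -/

theorem eigenspace_eq_range_of_mul_self_eq_smul {R M : Type*} [CommRing R] [AddCommGroup M]
    [Module R M] {f : Module.End R M} {c : R} (hc : IsUnit c) (hf : f * f = c • f) :
    f.eigenspace c = LinearMap.range f := by
  ext v
  rw [Module.End.mem_eigenspace_iff, LinearMap.mem_range]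
  constructor
  · intro hv
    obtain ⟨d, hdc⟩ := hc.exists_left_inv
    exact ⟨d • v, by rw [map_smul, hv, smul_smul, hdc, one_smul]⟩
  · rintro ⟨w, rfl⟩
    exact LinearMap.congr_fun hf w

section ScalarProduct

variable {R m n : Type*} [Fintype m] [Fintype n] [DecidableEq n]

theorem trace_mul_of_mul_eq_smul_one [CommSemiring R] {A : Matrix m n R} {B : Matrix n m R}
    {c : R} (hBA : B * A = c • 1) : (A * B).trace = Fintype.card n * c := by
  rw [trace_mul_comm, hBA, trace_smul, trace_one, smul_eq_mul, mul_comm]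

variable [CommRing R] [Nontrivial R] {A : Matrix m n R} {B : Matrix n m R} {c : R}

theorem rank_mul_of_mul_eq_smul_one (hc : c ∈ nonZeroDivisors R) (hBA : B * A = c • 1) :
    (A * B).rank = Fintype.card n := by
  have hBABA : B * (A * B) * A = (c * c) • 1 := by
    rw [← Matrix.mul_assoc, Matrix.mul_assoc, hBA, smul_mul_smul_comm, one_mul]
  apply le_antisymm
  · exact (rank_mul_le_left A B).trans A.rank_le_card_width
  · calc
      Fintype.card n = (B * (A * B) * A).rank := by
        rw [hBABA, rank_smul_of_mem_nonZeroDivisors _ (mul_mem hc hc), rank_one]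
      _ ≤ (B * (A * B)).rank := rank_mul_le_left _ _
      _ ≤ (A * B).rank := rank_mul_le_right _ _

theorem finrank_eigenspace_mul_of_mul_eq_smul_one (hc : IsUnit c) (hBA : B * A = c • 1) :
    Module.finrank R (Module.End.eigenspace (A * B).mulVecLin c) = Fintype.card n := by
  have hAB : A * B * (A * B) = c • (A * B) := by
    rw [Matrix.mul_assoc, ← Matrix.mul_assoc B, hBA, Matrix.smul_mul, Matrix.one_mul,
      Matrix.mul_smul]
  have hsq : (A * B).mulVecLin * (A * B).mulVecLin = c • (A * B).mulVecLin := by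
    refine LinearMap.ext fun v => ?_
    rw [Module.End.mul_eq_comp, ← mulVecLin_mul, hAB, LinearMap.smul_apply, mulVecLin_apply,
      mulVecLin_apply, smul_mulVec]
  rw [eigenspace_eq_range_of_mul_self_eq_smul hc hsq]
  exact rank_mul_of_mul_eq_smul_one hc.mem_nonZeroDivisors hBA

end ScalarProduct

section PowerRow

variable {R n : Type*} [Semiring R] [Fintype n] [DecidableEq n]

/-- The block row `[1, A, A², …, A^(τ-1)]`, with columns indexed by (block, column in the block).
Its Gram matrix `(powerRow τ A)ᴴ * powerRow τ A` for `A = ρU` is `X_ρ`. -/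
def powerRow (τ : ℕ) (A : Matrix n n R) : Matrix n (Fin τ × n) R :=
  .of fun a q => (A ^ (q.1 : ℕ)) a q.2

variable [StarRing R]

theorem conjTranspose_powerRow_mul_self_apply (τ : ℕ) (A : Matrix n n R) (p q : Fin τ × n) :
    ((powerRow τ A)ᴴ * powerRow τ A) p q = (Aᴴ ^ (p.1 : ℕ) * A ^ (q.1 : ℕ)) p.2 q.2 := by
  simp only [← conjTranspose_pow, mul_apply, conjTranspose_apply, powerRow, of_apply]

theorem powerRow_mul_conjTranspose_self (τ : ℕ) (A : Matrix n n R) :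
    powerRow τ A * (powerRow τ A)ᴴ = ∑ k ∈ range τ, A ^ k * Aᴴ ^ k := by
  ext a b
  simp only [← conjTranspose_pow, mul_apply, conjTranspose_apply, powerRow, of_apply,
    Fintype.sum_prod_type, Matrix.sum_apply,
    ← Fin.sum_univ_eq_sum_range fun k => ∑ c, (A ^ k) a c * star ((A ^ k) b c)]

end PowerRow

section Unitary

theorem inv_eq_conjTranspose_of_mem_unitaryGroup {n R : Type*} [Fintype n] [DecidableEq n]
    [CommRing R] [StarRing R] {U : Matrix n n R} (hU : U ∈ unitaryGroup n R) : U⁻¹ = Uᴴ :=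
  inv_eq_right_inv (mem_unitaryGroup_iff.mp hU)

variable {n : ℕ} {U : Matrix (Fin n) (Fin n) ℂ}

theorem zpowU_eq_zpow (hU : U ∈ unitaryGroup (Fin n) ℂ) (z : ℤ) : zpowU U z = U ^ z := by
  cases z with
  | ofNat k => simp [zpowU]
  | negSucc k =>
    simp [zpowU, zpow_negSucc, ← inv_pow', inv_eq_conjTranspose_of_mem_unitaryGroup hU]

theorem zpowU_natCast_sub_natCast (hU : U ∈ unitaryGroup (Fin n) ℂ) (i j : ℕ) :
    zpowU U (j - i) = Uᴴ ^ i * U ^ j := by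
  have hdet : IsUnit U.det := isUnit_det_of_right_inverse (mem_unitaryGroup_iff.mp hU)
  rw [zpowU_eq_zpow hU, sub_eq_neg_add, zpow_add hdet, zpow_neg_natCast, zpow_natCast, ← inv_pow',
    inv_eq_conjTranspose_of_mem_unitaryGroup hU]

theorem Xmat_eq_conjTranspose_powerRow_mul_self (hU : U ∈ unitaryGroup (Fin n) ℂ) (τ : ℕ)
    (ρ : ℝ) : Xmat τ ρ U = (powerRow τ ((ρ : ℂ) • U))ᴴ * powerRow τ ((ρ : ℂ) • U) := by
  ext p q
  rw [conjTranspose_powerRow_mul_self_apply, conjTranspose_smul, Complex.star_def,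
    Complex.conj_ofReal, smul_pow, smul_pow, smul_mul_smul_comm, ← pow_add,
    ← zpowU_natCast_sub_natCast hU]
  rfl

theorem powerRow_smul_mul_conjTranspose_self (hU : U ∈ unitaryGroup (Fin n) ℂ) (τ : ℕ) (ρ : ℝ) :
    powerRow τ ((ρ : ℂ) • U) * (powerRow τ ((ρ : ℂ) • U))ᴴ =
      ((∑ k ∈ range τ, ρ ^ (2 * k) : ℝ) : ℂ) • 1 := by
  have hpow (k : ℕ) : ((ρ : ℂ) • U) ^ k * ((ρ : ℂ) • U)ᴴ ^ k = ((ρ ^ (2 * k) : ℝ) : ℂ) • 1 := by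
    rw [conjTranspose_smul, Complex.star_def, Complex.conj_ofReal, smul_pow, smul_pow,
      smul_mul_smul_comm, ← star_eq_conjTranspose,
      pow_mul_pow_eq_one k (mem_unitaryGroup_iff.mp hU), ← pow_add, ← two_mul, Complex.ofReal_pow]
  simp only [powerRow_mul_conjTranspose_self, hpow, Complex.ofReal_sum, sum_smul]

end Unitary

theorem sum_range_pow_two_mul_pos {R : Type*} [Ring R] [LinearOrder R] [IsStrictOrderedRing R]
    {τ : ℕ} (hτ : 0 < τ) (x : R) : 0 < ∑ k ∈ range τ, x ^ (2 * k) :=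
  sum_pos' (fun k _ => (even_two_mul k).pow_nonneg x) ⟨0, mem_range.mpr hτ, by simp⟩

theorem stmt_2_general {n τ : ℕ} (hτ : 0 < τ) {U : Matrix (Fin n) (Fin n) ℂ}
    (hU : U ∈ unitaryGroup (Fin n) ℂ) (ρ : ℝ) :
    (Xmat τ ρ U).trace = (n : ℂ) * ((∑ k ∈ range τ, ρ ^ (2 * k) : ℝ) : ℂ) ∧
    Module.finrank ℂ
      (Module.End.eigenspace (Matrix.mulVecLin (Xmat τ ρ U))
        ((∑ k ∈ range τ, ρ ^ (2 * k) : ℝ) : ℂ)) = n ∧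
    (Xmat τ ρ U).rank = n := by
  have hgram := powerRow_smul_mul_conjTranspose_self hU τ ρ
  have hne : ((∑ k ∈ range τ, ρ ^ (2 * k) : ℝ) : ℂ) ≠ 0 :=
    Complex.ofReal_ne_zero.mpr (sum_range_pow_two_mul_pos hτ ρ).ne'
  rw [Xmat_eq_conjTranspose_powerRow_mul_self hU]
  refine ⟨?_, ?_, ?_⟩
  · simpa only [Fintype.card_fin] using trace_mul_of_mul_eq_smul_one hgram
  · simpa only [Fintype.card_fin] using finrank_eigenspace_mul_of_mul_eq_smul_one hne.isUnit hgram
  · simpa only [Fintype.card_fin] using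
      rank_mul_of_mul_eq_smul_one hne.isUnit.mem_nonZeroDivisors hgram

/-- the trace of `X_ρ` equals `n·λ`, the eigenspace of `X_ρ` for the
eigenvalue `λ` has dimension exactly `n`, and the rank of `X_ρ` is `n`. -/
theorem stmt_2 {n τ : ℕ} (hn : 0 < n) (hτ : 0 < τ)
    (U : Matrix (Fin n) (Fin n) ℂ) (hU₁ : Uᴴ * U = 1) (hU₂ : U * Uᴴ = 1)
    (ρ : ℝ) (hρ : ρ ∈ Set.Ioc (0 : ℝ) 1) :
    (Xmat τ ρ U).trace = (n : ℂ) * (((∑ k ∈ Finset.range τ, ρ ^ (2 * k) : ℝ)) : ℂ) ∧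
    Module.finrank ℂ
      (Module.End.eigenspace (Matrix.mulVecLin (Xmat τ ρ U))
        (((∑ k ∈ Finset.range τ, ρ ^ (2 * k) : ℝ)) : ℂ)) = n ∧
    (Xmat τ ρ U).rank = n :=
  stmt_2_general hτ (mem_unitaryGroup_iff.mpr hU₂) ρ
end

section
/- If the dynamical coupling is the n×n cyclic shift permutation matrix C and the past horizon is τ = n, then there exists an orthonormal basis of ℝ^n consisting of eigenvectors of the metric tensor Q, of which exactly ⌈n/2⌉ are symmetric (Jv = v) and exactly ⌊n/2⌋ are skew-symmetric (Jv = −v), where J is the n×n exchange matrix. -/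
open Matrix Finset

/-- The n×n real cyclic shift permutation matrix: `C e_k = e_{k+1 mod n}`,
i.e. `C_{ij} = 1` iff `i ≡ j + 1 (mod n)`. -/
def cycCR (n : ℕ) : Matrix (Fin n) (Fin n) ℝ :=
  fun i j => if (i : ℕ) = ((j : ℕ) + 1) % n then 1 else 0

/-- The metric tensor `Q` with cyclic-shift coupling and past horizon `τ = n`
(0-based indices): `Q_{ij} = wᵀ (Cᵀ)^i C^j w`. -/
noncomputable def Qcyc (n : ℕ) (w : Fin n → ℝ) : Matrix (Fin n) (Fin n) ℝ :=
  fun i j => w ⬝ᵥ (((cycCR n)ᵀ ^ (i : ℕ) * cycCR n ^ (j : ℕ)).mulVec w)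

/-- The n×n exchange matrix `J`: ones on the antidiagonal, zeros elsewhere. -/
def exchMat (n : ℕ) : Matrix (Fin n) (Fin n) ℝ :=
  fun i j => if j = i.rev then 1 else 0

/-!
Since `C` is orthogonal, `Q_{ij} = ⟨C^i w, C^j w⟩` depends only on the difference of `i` and `j`,
so `Q` is unchanged when both indices are reversed, that is, `Q` commutes with `J`. The commuting
symmetric operators `Q` and `J` have a common orthonormal eigenbasis. As `J` is an involution, its
eigenvalues there are `±1`; their number is `n` and their sum is `tr J`, the number of indices fixed
by reversal, which is the parity of `n`. Hence `⌈n/2⌉` of them equal `1`.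
-/

section CommutingOperators

open Module LinearMap

variable {𝕜 E : Type*} [RCLike 𝕜] [NormedAddCommGroup E] [InnerProductSpace 𝕜 E]
  [FiniteDimensional 𝕜 E] {T J : E →ₗ[𝕜] E} {n : ℕ}

theorem exists_orthonormalBasis_simultaneous_eigenvectors (hT : T.IsSymmetric)
    (hJ : J.IsSymmetric) (hTJ : Commute T J) (hn : finrank 𝕜 E = n) :
    ∃ (b : OrthonormalBasis (Fin n) 𝕜 E) (μ ν : Fin n → 𝕜),
      ∀ i, T (b i) = μ i • b i ∧ J (b i) = ν i • b i := by
  classical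
  have mapsTo (μ : End.Eigenvalues T) : ∀ x ∈ End.eigenspace T μ, J x ∈ End.eigenspace T μ :=
    End.mapsTo_genEigenspace_of_comm hTJ _ 1
  have hJμ (μ : End.Eigenvalues T) := hJ.restrict_invariant (mapsTo μ)
  let c := hT.direct_sum_isInternal.collectedOrthonormalBasis hT.orthogonalFamily_eigenspaces'
    fun μ => (hJμ μ).eigenvectorBasis rfl
  let e := Fintype.equivFinOfCardEq ((finrank_eq_card_basis c.toBasis).symm.trans hn)
  have eigen_T (a) : T (c a) = (a.1 : 𝕜) • c a :=
    End.mem_eigenspace_iff.mp (hT.direct_sum_isInternal.collectedOrthonormalBasis_mem _ _ a)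
  have eigen_J (a) : J (c a) = ((hJμ a.1).eigenvalues rfl a.2 : 𝕜) • c a := by
    have coe_c : c a = (hJμ a.1).eigenvectorBasis rfl a.2 := by
      simp [c, DirectSum.IsInternal.collectedOrthonormalBasis]
    rw [coe_c]
    exact congrArg Subtype.val ((hJμ a.1).apply_eigenvectorBasis rfl a.2)
  refine ⟨c.reindex e, fun i => (e.symm i).1,
    fun i => ((hJμ (e.symm i).1).eigenvalues rfl (e.symm i).2 : 𝕜), fun i => ?_⟩
  rw [c.reindex_apply]
  exact ⟨eigen_T _, eigen_J _⟩

theorem exists_orthonormalBasis_eigenvectors_of_commute_involution (hT : T.IsSymmetric)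
    (hJ : J.IsSymmetric) (hTJ : Commute T J) (hJJ : J * J = 1) (hn : finrank 𝕜 E = n) :
    ∃ (b : OrthonormalBasis (Fin n) 𝕜 E) (μ : Fin n → 𝕜) (s : Finset (Fin n)),
      (∀ i, T (b i) = μ i • b i) ∧ n + trace 𝕜 E J = 2 * #s ∧
      (∀ i ∈ s, J (b i) = b i) ∧ ∀ i ∉ s, J (b i) = -b i := by
  classical
  obtain ⟨b, μ, ν, h⟩ := exists_orthonormalBasis_simultaneous_eigenvectors hT hJ hTJ hn
  have ν_eq (i : Fin n) : ν i = 1 ∨ ν i = -1 := by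
    have : (ν i * ν i) • b i = (1 : 𝕜) • b i := by
      rw [mul_smul, ← (h i).2, ← map_smul, ← (h i).2, one_smul]
      exact LinearMap.congr_fun hJJ (b i)
    exact mul_self_eq_one_iff.mp (smul_left_injective 𝕜 (b.toBasis.ne_zero i) (by simpa using this))
  have trace_eq : trace 𝕜 E J = ∑ i, ν i := by
    simp only [trace_eq_sum_inner J b, (h _).2, inner_smul_right, inner_self_eq_norm_sq_to_K,
      b.norm_eq_one, RCLike.ofReal_one, one_pow, mul_one]
  have one_add_ν (i : Fin n) : 1 + ν i = if ν i = 1 then 2 else 0 := by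
    split_ifs with hi
    · rw [hi, one_add_one_eq_two]
    · rw [(ν_eq i).resolve_left hi, add_neg_cancel]
  refine ⟨b, μ, univ.filter fun i => ν i = 1, fun i => (h i).1, ?_, fun i hi => ?_, fun i hi => ?_⟩
  · calc n + trace 𝕜 E J = ∑ i, (1 + ν i) := by simp [trace_eq, sum_add_distrib]
      _ = 2 * #(univ.filter fun i => ν i = 1) := by
        simp only [one_add_ν, ← sum_filter, sum_const, nsmul_eq_mul, mul_comm]
  · rw [(h i).2, (mem_filter_univ i).mp hi, one_smul]
  · rw [(h i).2, (ν_eq i).resolve_left (fun h₁ => hi ((mem_filter_univ i).mpr h₁)),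
      neg_one_smul]

end CommutingOperators

section ExchangeMatrix

variable {n : ℕ}

theorem exchMat_eq_permMatrix (n : ℕ) : exchMat n = Fin.revPerm.permMatrix ℝ := by
  ext i j
  simp [exchMat, Equiv.toPEquiv_apply, PEquiv.toMatrix_apply, eq_comm]

theorem isSymm_exchMat (n : ℕ) : (exchMat n).IsSymm := by
  rw [exchMat_eq_permMatrix, IsSymm, transpose_permMatrix]
  rfl

theorem exchMat_mul_self (n : ℕ) : exchMat n * exchMat n = 1 := by
  rw [exchMat_eq_permMatrix, ← permMatrix_mul, ← permMatrix_one]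
  congr 1
  ext i
  simp

theorem ncard_fixedPoints_revPerm (n : ℕ) :
    (Function.fixedPoints (Fin.revPerm : Equiv.Perm (Fin n))).ncard = n % 2 := by
  have mem_iff (i : Fin n) : i ∈ Function.fixedPoints Fin.revPerm ↔ 2 * (i : ℕ) + 1 = n := by
    simp only [Function.mem_fixedPoints, Function.IsFixedPt, Fin.revPerm_apply, Fin.ext_iff,
      Fin.val_rev]
    omega
  rcases n.even_or_odd' with ⟨k, rfl | rfl⟩
  · rw [Nat.mul_mod_right, Set.ncard_eq_zero, Set.eq_empty_iff_forall_notMem]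
    intro i hi
    have := (mem_iff i).mp hi
    omega
  · rw [Nat.mul_add_mod, Set.ncard_eq_one]
    refine ⟨⟨k, by omega⟩, Set.ext fun i => ?_⟩
    simp only [mem_iff, Set.mem_singleton_iff, Fin.ext_iff]
    omega

theorem trace_exchMat (n : ℕ) : (exchMat n).trace = (n % 2 : ℕ) := by
  rw [exchMat_eq_permMatrix, trace_permutation, ncard_fixedPoints_revPerm]

theorem commute_exchMat_of_rev_rev {A : Matrix (Fin n) (Fin n) ℝ}
    (hA : ∀ i j, A i.rev j.rev = A i j) : Commute A (exchMat n) := by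
  rw [exchMat_eq_permMatrix, commute_iff_eq, PEquiv.toMatrix_toPEquiv_mul,
    PEquiv.mul_toMatrix_toPEquiv]
  ext i j
  simpa using (hA i j.rev).symm

theorem exists_orthonormal_symm_skew_eigenvectors_of_rev_rev {A : Matrix (Fin n) (Fin n) ℝ}
    (hA : A.IsSymm) (hrev : ∀ i j, A i.rev j.rev = A i j) :
    ∃ (v : Fin n → Fin n → ℝ) (μ : Fin n → ℝ) (S : Finset (Fin n)),
      (∀ i j : Fin n, v i ⬝ᵥ v j = if i = j then 1 else 0) ∧
      (∀ i : Fin n, A.mulVec (v i) = μ i • v i) ∧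
      S.card = (n + 1) / 2 ∧
      (∀ i ∈ S, (exchMat n).mulVec (v i) = v i) ∧
      (∀ i ∉ S, (exchMat n).mulVec (v i) = -(v i)) := by
  have symmetric_A := isSymmetric_toEuclideanLin_iff.mpr (isHermitian_iff_isSymm.mpr hA)
  have symmetric_J := isSymmetric_toEuclideanLin_iff.mpr
    (isHermitian_iff_isSymm.mpr (isSymm_exchMat n))
  have commute_AJ : Commute (toEuclideanLin A) (toEuclideanLin (exchMat n)) :=
    (commute_exchMat_of_rev_rev hrev).map (toLpLinAlgEquiv 2)
  have J_mul_J : toEuclideanLin (exchMat n) * toEuclideanLin (exchMat n) = 1 := by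
    simpa using! congrArg (toLpLinAlgEquiv (R := ℝ) 2) (exchMat_mul_self n)
  have trace_J : LinearMap.trace ℝ _ (toEuclideanLin (exchMat n)) = (n % 2 : ℕ) := by
    rw [← trace_exchMat, toEuclideanLin_eq_toLin_orthonormal, trace_toLin_eq]
  obtain ⟨b, μ, S, hμ, hcard, hsymm, hskew⟩ :=
    exists_orthonormalBasis_eigenvectors_of_commute_involution symmetric_A symmetric_J commute_AJ
      J_mul_J finrank_euclideanSpace_fin
  refine ⟨fun i => (b i).ofLp, μ, S, fun i j => ?_, fun i => congrArg WithLp.ofLp (hμ i), ?_,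
    fun i hi => congrArg WithLp.ofLp (hsymm i hi), fun i hi => congrArg WithLp.ofLp (hskew i hi)⟩
  · rw [← orthonormal_iff_ite.mp b.orthonormal i j, EuclideanSpace.inner_eq_star_dotProduct,
      star_trivial, dotProduct_comm]
  · rw [trace_J] at hcard
    norm_cast at hcard
    omega

end ExchangeMatrix

section MetricTensor

variable {m R : Type*} [Fintype m] [DecidableEq m] [CommSemiring R]

/-- The metric tensor `Q_{ij} = wᵀ (Cᵀ)^i C^j w` of a dynamical coupling `C` with input weights `w`
and past horizon `τ`, indexed from `0`. -/
def metricTensor (C : Matrix m m R) (w : m → R) (τ : ℕ) : Matrix (Fin τ) (Fin τ) R :=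
  of fun i j => w ⬝ᵥ ((Cᵀ ^ (i : ℕ) * C ^ (j : ℕ)) *ᵥ w)

theorem isSymm_metricTensor (C : Matrix m m R) (w : m → R) (τ : ℕ) :
    (metricTensor C w τ).IsSymm := by
  ext i j
  simp only [metricTensor, transpose_apply, of_apply]
  rw [dotProduct_mulVec, dotProduct_comm, ← mulVec_transpose, transpose_mul, transpose_pow,
    transpose_pow, transpose_transpose]

theorem transpose_pow_add_mul_pow_add {C : Matrix m m R} (hC : Cᵀ * C = 1) (a b d : ℕ) :
    Cᵀ ^ (a + d) * C ^ (d + b) = Cᵀ ^ a * C ^ b := by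
  rw [pow_add, pow_add, mul_assoc, ← mul_assoc (Cᵀ ^ d), pow_mul_pow_eq_one d hC, one_mul]

theorem metricTensor_rev_rev {C : Matrix m m R} (hC : Cᵀ * C = 1) (w : m → R) (τ : ℕ)
    (i j : Fin τ) : metricTensor C w τ i.rev j.rev = metricTensor C w τ i j := by
  -- Adding `i + j` to the exponents on the left gives `j + (τ - 1)` and `i + (τ - 1)`.
  have shift : Cᵀ ^ (i.rev : ℕ) * C ^ (j.rev : ℕ) = Cᵀ ^ (j : ℕ) * C ^ (i : ℕ) := by
    rw [← transpose_pow_add_mul_pow_add hC _ _ (i + j),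
      ← transpose_pow_add_mul_pow_add hC (j : ℕ) i (τ - 1)]
    congr 2 <;> simp only [Fin.val_rev] <;> omega
  rw [← (isSymm_metricTensor C w τ).apply i j]
  simp only [metricTensor, of_apply, shift]

theorem stmt_18_general (C : Matrix m m ℝ) (hC : Cᵀ * C = 1) (w : m → ℝ) (τ : ℕ) :
    ∃ (v : Fin τ → Fin τ → ℝ) (μ : Fin τ → ℝ) (S : Finset (Fin τ)),
      (∀ i j : Fin τ, v i ⬝ᵥ v j = if i = j then 1 else 0) ∧
      (∀ i : Fin τ, (metricTensor C w τ).mulVec (v i) = μ i • v i) ∧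
      S.card = (τ + 1) / 2 ∧
      (∀ i ∈ S, (exchMat τ).mulVec (v i) = v i) ∧
      (∀ i ∉ S, (exchMat τ).mulVec (v i) = -(v i)) :=
  exists_orthonormal_symm_skew_eigenvectors_of_rev_rev (isSymm_metricTensor C w τ)
    (metricTensor_rev_rev hC w τ)

end MetricTensor

theorem cycCR_eq_permMatrix (n : ℕ) : cycCR n = (finRotate n)⁻¹.permMatrix ℝ := by
  ext i j
  have : NeZero n := i.neZero
  have val_rotate : (finRotate n j : ℕ) = (j + 1) % n := by
    rw [finRotate_apply, Fin.val_add, Fin.val_one', Nat.add_mod_mod]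
  simp only [cycCR, PEquiv.toMatrix_apply, Equiv.toPEquiv_apply, Option.mem_some_iff,
    Equiv.Perm.inv_eq_iff_eq, Fin.ext_iff, val_rotate]

theorem transpose_cycCR_mul_cycCR (n : ℕ) : (cycCR n)ᵀ * cycCR n = 1 := by
  rw [cycCR_eq_permMatrix, transpose_permMatrix, ← permMatrix_mul, mul_inv_cancel, permMatrix_one]

/-- with cyclic-shift coupling and `τ = n`, there is an orthonormal
basis of eigenvectors of `Q` with exactly `⌈n/2⌉` symmetric ones (`Jv = v`) and
exactly `⌊n/2⌋` skew-symmetric ones (`Jv = -v`). -/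
theorem stmt_18 (n : ℕ) (hn : 0 < n) (w : Fin n → ℝ) :
    ∃ (v : Fin n → Fin n → ℝ) (μ : Fin n → ℝ) (S : Finset (Fin n)),
      (∀ i j : Fin n, v i ⬝ᵥ v j = if i = j then 1 else 0) ∧
      (∀ i : Fin n, (Qcyc n w).mulVec (v i) = μ i • v i) ∧
      S.card = (n + 1) / 2 ∧
      (∀ i ∈ S, (exchMat n).mulVec (v i) = v i) ∧
      (∀ i ∉ S, (exchMat n).mulVec (v i) = -(v i)) :=
  stmt_18_general (cycCR n) (transpose_cycCR_mul_cycCR n) w n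
end
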